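/- arXiv:2409.16026 — 3 statements merged into one kernel-verified Lean document; each statement's English description precedes it below -/
import Mathlib

section
/- For every real number a, the sequence α_n(a) := (2/3)^n · p_n(a,1/4) satisfies α_0(a) = 1 and, for every integer n ≥ 1, the recursion 3·α_n(a) = 2·α_{n-1}(a) + Σ_{l=0}^{n-1} C(n,l)·α_l(a) + 3·a^n. -/
open Polynomial

/-- Lehmer's polynomials `q_k(x)` for `k ≥ -1`, shifted so that `lehmerQ n = q_{n-1}`:
`q_{-1}(x) = 1` and `q_{k+1}(x) = (2(k+1)x+1) q_k(x) + 2x(1-x) q_k'(x)`. -/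
noncomputable def lehmerQ : ℕ → Polynomial ℝ
  | 0 => 1
  | n + 1 => (C (2 * (n : ℝ)) * X + 1) * lehmerQ n + (2 * X * (1 - X)) * derivative (lehmerQ n)

/-- The polynomials `p_k(a,x)` for `k ≥ -1`, shifted so that `lehmerPa a n = p_{n-1}(a,·)`:
`p_{-1}(a,x) = 0` and `p_{k+1}(a,x) = 2((k+1-a)x+a) p_k(a,x) + 2x(1-x) ∂ₓp_k(a,x) + q_k(x)`. -/
noncomputable def lehmerPa (a : ℝ) : ℕ → Polynomial ℝ
  | 0 => 0
  | n + 1 => C 2 * (C ((n : ℝ) - a) * X + C a) * lehmerPa a n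
      + (2 * X * (1 - X)) * derivative (lehmerPa a n) + lehmerQ n

/-- The sequence `α_n(a) := (2/3)^n p_n(a,1/4)`. -/
noncomputable def alphaSeq (a : ℝ) (n : ℕ) : ℝ :=
  (2 / 3 : ℝ) ^ n * (lehmerPa a (n + 1)).eval (1 / 4)

/-- The graded derivation `f ↦ 2nx f + 2x(1-x) f'` driving Lehmer's recursions. -/
noncomputable def lehmerD (n : ℕ) (f : ℝ[X]) : ℝ[X] :=
  2 * (n : ℝ[X]) * X * f + 2 * X * (1 - X) * derivative f

lemma lehmerD_add (n : ℕ) (f g : ℝ[X]) : lehmerD n (f + g) = lehmerD n f + lehmerD n g := by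
  simp only [lehmerD, derivative_add]
  ring

lemma lehmerD_sum {ι : Type*} (s : Finset ι) (n : ℕ) (f : ι → ℝ[X]) :
    lehmerD n (∑ i ∈ s, f i) = ∑ i ∈ s, lehmerD n (f i) := by
  simp only [lehmerD, derivative_sum, Finset.mul_sum, Finset.sum_add_distrib]

lemma lehmerD_mul (m n : ℕ) (f g : ℝ[X]) :
    lehmerD (m + n) (f * g) = lehmerD m f * g + f * lehmerD n g := by
  simp only [lehmerD, derivative_mul]
  push_cast
  ring

lemma lehmerD_natCast_mul (n k : ℕ) (f : ℝ[X]) :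
    lehmerD n ((k : ℝ[X]) * f) = k * lehmerD n f := by
  simp only [lehmerD, derivative_mul, derivative_natCast]
  ring

lemma lehmerD_X_mul (n : ℕ) (f : ℝ[X]) :
    lehmerD n (X * f) = X * (2 * (1 - X) * f + lehmerD n f) := by
  simp only [lehmerD, derivative_mul, derivative_X]
  ring

lemma lehmerD_one_sub_X_mul (n : ℕ) (f : ℝ[X]) :
    lehmerD (n + 1) ((1 - X) * f) = (1 - X) * lehmerD n f := by
  simp only [lehmerD, derivative_mul, derivative_sub, derivative_X, derivative_one]
  push_cast
  ring

lemma lehmerD_pow (m : ℕ) : lehmerD m ((2 * (1 - X)) ^ m) = 0 := by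
  induction m with
  | zero => simp [lehmerD]
  | succ m ih =>
    rw [pow_succ, lehmerD_mul, ih]
    simp only [lehmerD, derivative_mul, derivative_sub, derivative_X, derivative_one,
      derivative_ofNat]
    push_cast
    ring

lemma lehmerQ_succ (n : ℕ) : lehmerQ (n + 1) = lehmerD n (lehmerQ n) + lehmerQ n := by
  simp only [lehmerQ, lehmerD, C_mul, C_ofNat, map_natCast]
  ring

lemma lehmerPa_succ (a : ℝ) (n : ℕ) :
    lehmerPa a (n + 1) =
      lehmerD n (lehmerPa a n) + C a * (2 * (1 - X)) * lehmerPa a n + lehmerQ n := by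
  simp only [lehmerPa, lehmerD, C_sub, C_ofNat, map_natCast]
  ring

/-- The binomial convolution `∑_{l ≤ n} C(n,l) (2(1-x))^{n-l} f_l`. -/
noncomputable def lehmerBinomSum (f : ℕ → ℝ[X]) (n : ℕ) : ℝ[X] :=
  ∑ ij ∈ Finset.HasAntidiagonal.antidiagonal n,
    (n.choose ij.1 : ℝ[X]) * ((2 * (1 - X)) ^ ij.2 * f ij.1)

lemma lehmerBinomSum_succ (f : ℕ → ℝ[X]) (n : ℕ) :
    lehmerBinomSum f (n + 1) =
      2 * (1 - X) * lehmerBinomSum f n + lehmerBinomSum (fun l => f (l + 1)) n := by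
  unfold lehmerBinomSum
  rw [Finset.sum_antidiagonal_choose_succ_mul (fun i j => (2 * (1 - X)) ^ j * f i) n,
    Finset.mul_sum]
  congr 1
  · exact Finset.sum_congr rfl fun ij _ => by ring
  · refine Finset.sum_congr rfl fun ij hij => ?_
    rw [Nat.choose_symm_of_eq_add (Finset.HasAntidiagonal.mem_antidiagonal.mp hij).symm]

lemma lehmerBinomSum_add (f g : ℕ → ℝ[X]) (n : ℕ) :
    lehmerBinomSum (fun l => f l + g l) n = lehmerBinomSum f n + lehmerBinomSum g n := by
  simp only [lehmerBinomSum, mul_add, Finset.sum_add_distrib]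

lemma lehmerBinomSum_mul (c : ℝ[X]) (f : ℕ → ℝ[X]) (n : ℕ) :
    lehmerBinomSum (fun l => c * f l) n = c * lehmerBinomSum f n := by
  simp only [lehmerBinomSum, Finset.mul_sum]
  exact Finset.sum_congr rfl fun ij _ => by ring

lemma lehmerD_lehmerBinomSum (f : ℕ → ℝ[X]) (n : ℕ) :
    lehmerD (n + 1) (lehmerBinomSum f n) =
      lehmerBinomSum (fun l => lehmerD (l + 1) (f l)) n := by
  unfold lehmerBinomSum
  rw [lehmerD_sum]
  refine Finset.sum_congr rfl fun ij hij => ?_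
  have h : n + 1 = ij.2 + (ij.1 + 1) := by
    have := Finset.HasAntidiagonal.mem_antidiagonal.mp hij
    omega
  rw [lehmerD_natCast_mul, h, lehmerD_mul, lehmerD_pow, zero_mul, zero_add]

/-- Coefficient form of `(1 - x e^{2(1-x)t}) ∂ₜQ = (1-x) Q` for the exponential generating
function `Q` of `lehmerQ`. -/
lemma lehmerQ_succ_eq_binomSum (n : ℕ) :
    lehmerQ (n + 1) =
      X * lehmerBinomSum (fun l => lehmerQ (l + 1)) n + (1 - X) * lehmerQ n := by
  induction n with
  | zero => simp [lehmerBinomSum, lehmerQ]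
  | succ n ih =>
    have hS : lehmerBinomSum (fun l => lehmerQ (l + 1 + 1)) n =
        lehmerD (n + 1) (lehmerBinomSum (fun l => lehmerQ (l + 1)) n) +
          lehmerBinomSum (fun l => lehmerQ (l + 1)) n := by
      rw [lehmerD_lehmerBinomSum, ← lehmerBinomSum_add]
      simp only [← lehmerQ_succ]
    have hD := congrArg (lehmerD (n + 1)) ih
    rw [lehmerD_add, lehmerD_X_mul, lehmerD_one_sub_X_mul] at hD
    rw [lehmerBinomSum_succ, hS]
    linear_combination lehmerQ_succ (n + 1) + hD + ih - (1 - X) * lehmerQ_succ n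

/-- Coefficient form of `(1 - x e^{2(1-x)t}) ∂ₜP = (1-x) P + (1-x) e^{2a(1-x)t}` for the
exponential generating function `P` of `lehmerPa a`. -/
lemma lehmerPa_succ_eq_binomSum (a : ℝ) (n : ℕ) :
    lehmerPa a (n + 1) =
      X * lehmerBinomSum (fun l => lehmerPa a (l + 1)) n + (1 - X) * lehmerPa a n +
        (1 - X) * (C (a ^ n) * (2 * (1 - X)) ^ n) := by
  induction n with
  | zero => simp [lehmerBinomSum, lehmerPa, lehmerQ]
  | succ n ih =>
    have hS : lehmerBinomSum (fun l => lehmerPa a (l + 1 + 1)) n =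
        lehmerD (n + 1) (lehmerBinomSum (fun l => lehmerPa a (l + 1)) n) +
          C a * (2 * (1 - X)) * lehmerBinomSum (fun l => lehmerPa a (l + 1)) n +
          lehmerBinomSum (fun l => lehmerQ (l + 1)) n := by
      rw [lehmerD_lehmerBinomSum, ← lehmerBinomSum_mul, ← lehmerBinomSum_add,
        ← lehmerBinomSum_add]
      simp only [← lehmerPa_succ]
    have hC : lehmerD n (C (a ^ n) * (2 * (1 - X)) ^ n) = 0 := by
      have h := lehmerD_mul 0 n (C (a ^ n)) ((2 * (1 - X)) ^ n)
      rw [lehmerD_pow, zero_add] at h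
      rw [h]
      simp [lehmerD]
    have hD := congrArg (lehmerD (n + 1)) ih
    rw [lehmerD_add, lehmerD_add, lehmerD_X_mul, lehmerD_one_sub_X_mul, lehmerD_one_sub_X_mul,
      hC] at hD
    rw [lehmerBinomSum_succ, hS, pow_succ a, C_mul]
    linear_combination lehmerPa_succ a (n + 1) + hD + C a * (2 * (1 - X)) * ih -
      (1 - X) * lehmerPa_succ a n + lehmerQ_succ_eq_binomSum n

/-- For every real `a`, the sequence `α_n(a) = (2/3)^n p_n(a,1/4)` satisfies `α_0(a) = 1` and,
for every `n ≥ 1`, `3 α_n(a) = 2 α_{n-1}(a) + ∑_{l=0}^{n-1} C(n,l) α_l(a) + 3 aⁿ`. -/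
theorem alphaSeq_recursion (a : ℝ) :
    alphaSeq a 0 = 1 ∧
    ∀ n : ℕ, 1 ≤ n →
      3 * alphaSeq a n =
        2 * alphaSeq a (n - 1) +
          ∑ l ∈ Finset.range n, (Nat.choose n l : ℝ) * alphaSeq a l + 3 * a ^ n := by
  refine ⟨by simp [alphaSeq, lehmerPa, lehmerQ], fun n hn => ?_⟩
  obtain ⟨n, rfl⟩ := Nat.exists_eq_add_of_le' hn
  have hsum : (2 / 3 : ℝ) ^ (n + 1) *
      (lehmerBinomSum (fun l => lehmerPa a (l + 1)) (n + 1)).eval (1 / 4) =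
      ∑ l ∈ Finset.range (n + 1 + 1), ((n + 1).choose l : ℝ) * alphaSeq a l := by
    rw [lehmerBinomSum, eval_finsetSum, Finset.mul_sum,
      ← Finset.Nat.sum_antidiagonal_eq_sum_range_succ_mk
        (fun ij : ℕ × ℕ => ((n + 1).choose ij.1 : ℝ) * alphaSeq a ij.1)]
    refine Finset.sum_congr rfl fun ij hij => ?_
    have hw : (2 / 3 : ℝ) ^ ij.2 * (2 * (1 - 1 / 4)) ^ ij.2 = 1 := by
      rw [← mul_pow]
      norm_num
    rw [← Finset.HasAntidiagonal.mem_antidiagonal.mp hij, pow_add]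
    simp only [alphaSeq, eval_mul, eval_pow, eval_sub, eval_one, eval_X, eval_natCast,
      eval_ofNat]
    linear_combination ((ij.1 + ij.2).choose ij.1 : ℝ) * (2 / 3) ^ ij.1 *
      (lehmerPa a (ij.1 + 1)).eval (1 / 4) * hw
  rw [Finset.sum_range_succ, Nat.choose_self] at hsum
  have hw : (2 / 3 : ℝ) ^ (n + 1) * (2 * (1 - 1 / 4)) ^ (n + 1) = 1 := by
    rw [← mul_pow]
    norm_num
  have h := congrArg (eval (1 / 4)) (lehmerPa_succ_eq_binomSum a (n + 1))
  simp only [eval_add, eval_mul, eval_pow, eval_sub, eval_one, eval_X, eval_C,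
    eval_ofNat] at h
  have h0 : alphaSeq a n = (2 / 3 : ℝ) ^ n * (lehmerPa a (n + 1)).eval (1 / 4) := rfl
  have h1 : alphaSeq a (n + 1) =
      (2 / 3 : ℝ) ^ (n + 1) * (lehmerPa a (n + 1 + 1)).eval (1 / 4) := rfl
  rw [Nat.add_sub_cancel]
  push_cast at hsum
  linear_combination 4 * (2 / 3 : ℝ) ^ (n + 1) * h + hsum + 4 * h1 - 2 * h0 +
    3 * a ^ (n + 1) * hw
end

section
/- For every integer k ≥ 0 and every real number a > 1/2: ζ_HCB(1-k,a) = ((2a-1)·Γ(a+1)² / (a·Γ(2a+1))) · (2/3)^k · ( p_{k-1}(a,1/4) + 4^{a-1}·(2/√3)·B(1/4; a-1/2, 1/2)·q_{k-1}(1/4) ). In particular, ζ_HCB(1-k,a) lies in (Γ(a+1)²/Γ(2a+1))·( ℚ(a) + (4^a/√3)·B(1/4; a-1/2, 1/2)·ℚ(a) ). -/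
open Polynomial

/-- The generalized binomial coefficient `C(x,y) = Γ(x+1)/(Γ(y+1) Γ(x-y+1))`. -/
noncomputable def genBinom (x y : ℝ) : ℝ :=
  Real.Gamma (x + 1) / (Real.Gamma (y + 1) * Real.Gamma (x - y + 1))

/-- The Hurwitz type central binomial series
`ζ_HCB(s,a) = ∑_{n≥0} 1 / ( C(2(n+a), n+a) (n+a)^s )`. -/
noncomputable def zetaHCB (s : ℤ) (a : ℝ) : ℝ :=
  ∑' n : ℕ, 1 / (genBinom (2 * ((n : ℝ) + a)) ((n : ℝ) + a) * ((n : ℝ) + a) ^ s)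

/-- The incomplete beta function `B(z; α, β) = ∫_0^z x^{α-1} (1-x)^{β-1} dx`. -/
noncomputable def incBeta (z α β : ℝ) : ℝ :=
  ∫ x in (0 : ℝ)..z, x ^ (α - 1) * (1 - x) ^ (β - 1)

/-- The coefficient `4ⁿ / ((n+a) C(2(n+a), n+a))`. -/
noncomputable def hcbCoeff (a : ℝ) (n : ℕ) : ℝ :=
  4 ^ n / (genBinom (2 * ((n : ℝ) + a)) ((n : ℝ) + a) * ((n : ℝ) + a))

/-- The power series `∑ 4ⁿ (n+a)^(k-1) xⁿ / C(2(n+a), n+a)`. -/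
noncomputable def hcbSeries (a : ℝ) (k : ℕ) (x : ℝ) : ℝ :=
  ∑' n : ℕ, hcbCoeff a n * ((n : ℝ) + a) ^ k * x ^ n

lemma genBinom_central_pos {y : ℝ} (hy : 0 < y) : 0 < genBinom (2 * y) y := by
  unfold genBinom
  have h1 := Real.Gamma_pos_of_pos (s := 2 * y + 1) (by linarith)
  have h2 := Real.Gamma_pos_of_pos (s := y + 1) (by linarith)
  have h3 := Real.Gamma_pos_of_pos (s := 2 * y - y + 1) (by linarith)
  positivity

lemma genBinom_central_succ {y : ℝ} (hy : 0 < y) :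
    (y + 1) * genBinom (2 * (y + 1)) (y + 1) = 2 * (2 * y + 1) * genBinom (2 * y) y := by
  unfold genBinom
  have h2 := Real.Gamma_pos_of_pos (s := y + 1) (by linarith)
  rw [show 2 * (y + 1) + 1 = (2 * y + 1 + 1) + 1 by ring,
    show 2 * (y + 1) - (y + 1) + 1 = y + 1 + 1 by ring, show 2 * y - y + 1 = y + 1 by ring,
    Real.Gamma_add_one (s := 2 * y + 1 + 1) (by positivity),
    Real.Gamma_add_one (s := 2 * y + 1) (by positivity),
    Real.Gamma_add_one (s := y + 1) (by positivity)]
  field_simp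
  ring

lemma hcbCoeff_pos {a : ℝ} (ha : 0 < a) (n : ℕ) : 0 < hcbCoeff a n := by
  have hy : 0 < (n : ℝ) + a := by positivity
  have := genBinom_central_pos hy
  unfold hcbCoeff
  positivity

lemma hcbCoeff_succ {a : ℝ} (ha : 0 < a) (n : ℕ) :
    ((n : ℝ) + a + 1 / 2) * hcbCoeff a (n + 1) = ((n : ℝ) + a) * hcbCoeff a n := by
  have hy : 0 < (n : ℝ) + a := by positivity
  have h1 := genBinom_central_pos hy
  have h2 := genBinom_central_pos (y := (n : ℝ) + a + 1) (by positivity)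
  have h := genBinom_central_succ hy
  unfold hcbCoeff
  push_cast
  rw [show (n : ℝ) + 1 + a = n + a + 1 by ring,
    mul_comm (genBinom (2 * ((n : ℝ) + a + 1)) _), h]
  field_simp
  ring

lemma hcbCoeff_le {a : ℝ} (ha : 0 < a) (n : ℕ) : hcbCoeff a n ≤ hcbCoeff a 0 := by
  induction n with
  | zero => exact le_rfl
  | succ n ih =>
    refine le_trans ?_ ih
    have hy : 0 < (n : ℝ) + a := by positivity
    have h := hcbCoeff_succ ha n
    have hp := hcbCoeff_pos ha (n + 1)
    nlinarith

lemma summable_hcbCoeff_mul {a : ℝ} (ha : 0 < a) (k : ℕ) {x : ℝ} (hx : |x| < 1) :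
    Summable fun n : ℕ => hcbCoeff a n * ((n : ℝ) + a) ^ k * x ^ n := by
  have hs : Summable fun n : ℕ => ((n : ℝ) + 1) ^ k * |x| ^ n := by
    rcases eq_or_ne x 0 with rfl | hx0
    · refine summable_of_ne_finset_zero (s := {0}) fun n hn => ?_
      have : n ≠ 0 := by simpa using hn
      simp [this]
    · have h := (summable_nat_add_iff 1).2
        (summable_pow_mul_geometric_of_norm_lt_one k (r := |x|) (by simpa using hx))
      refine (h.mul_right |x|⁻¹).congr fun n => ?_
      have : |x| ≠ 0 := abs_ne_zero.2 hx0
      push_cast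
      field_simp
      ring
  refine Summable.of_norm_bounded (hs.mul_left (hcbCoeff a 0 * (1 + a) ^ k)) fun n => ?_
  have hc := hcbCoeff_pos ha n
  have hy : 0 < (n : ℝ) + a := by positivity
  rw [norm_mul, norm_mul, norm_pow, norm_pow, Real.norm_of_nonneg hc.le,
    Real.norm_of_nonneg hy.le, Real.norm_eq_abs]
  have h1 : ((n : ℝ) + a) ^ k ≤ (1 + a) ^ k * ((n : ℝ) + 1) ^ k := by
    rw [← mul_pow]
    gcongr
    have : 0 ≤ a * n := by positivity
    nlinarith [Nat.cast_nonneg (α := ℝ) n]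
  calc hcbCoeff a n * ((n : ℝ) + a) ^ k * |x| ^ n
      ≤ hcbCoeff a 0 * ((1 + a) ^ k * ((n : ℝ) + 1) ^ k) * |x| ^ n := by
        gcongr
        · exact (hcbCoeff_pos ha 0).le
        · exact hcbCoeff_le ha n
    _ = _ := by ring

lemma hasDerivAt_hcbSeries {a : ℝ} (ha : 0 < a) (k : ℕ) {x : ℝ} (hx : |x| < 1) :
    HasDerivAt (hcbSeries a k)
      (∑' n : ℕ, hcbCoeff a n * ((n : ℝ) + a) ^ k * (n * x ^ (n - 1))) x := by
  obtain ⟨r, hxr, hr1⟩ := exists_between hx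
  have hr0 : 0 < r := (abs_nonneg x).trans_lt hxr
  have hu : Summable fun n : ℕ => hcbCoeff a n * ((n : ℝ) + a) ^ (k + 1) * r ^ n * r⁻¹ :=
    (summable_hcbCoeff_mul ha (k + 1) (by rwa [abs_of_pos hr0])).mul_right _
  refine hasDerivAt_tsum_of_isPreconnected (t := Metric.ball 0 r) (y₀ := x)
    (g := fun n y => hcbCoeff a n * ((n : ℝ) + a) ^ k * y ^ n)
    (g' := fun n y => hcbCoeff a n * ((n : ℝ) + a) ^ k * (n * y ^ (n - 1)))
    hu Metric.isOpen_ball (convex_ball 0 r).isPreconnected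
    (fun n y _ => (hasDerivAt_pow n y).const_mul _) (fun n y hy => ?_)
    (by simpa using hxr) (summable_hcbCoeff_mul ha k hx) (by simpa using hxr)
  have hc := hcbCoeff_pos ha n
  have hna : 0 < (n : ℝ) + a := by positivity
  have hy : |y| < r := by simpa using hy
  rcases n with _ | n
  · simp only [Nat.cast_zero, zero_mul, mul_zero, norm_zero]
    positivity
  · rw [norm_mul, norm_mul, norm_mul, norm_pow, norm_pow, Real.norm_of_nonneg hc.le,
      Real.norm_of_nonneg hna.le, Real.norm_of_nonneg (Nat.cast_nonneg _), Real.norm_eq_abs]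
    calc hcbCoeff a (n + 1) * (((n + 1 : ℕ) : ℝ) + a) ^ k * ((n + 1 : ℕ) * |y| ^ (n + 1 - 1))
        ≤ hcbCoeff a (n + 1) * (((n + 1 : ℕ) : ℝ) + a) ^ k *
            ((((n + 1 : ℕ) : ℝ) + a) * r ^ (n + 1 - 1)) := by
          gcongr
          linarith
      _ = _ := by
          rw [Nat.add_sub_cancel]
          field_simp
          ring

/-- Termwise, `x d/dx` acts on `x^a ∑ cₙ (n+a)^k xⁿ` by raising `k`. -/
lemma mul_deriv_hcbSeries {a : ℝ} (ha : 0 < a) (k : ℕ) {x : ℝ} (hx : |x| < 1) :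
    x * deriv (hcbSeries a k) x = hcbSeries a (k + 1) x - a * hcbSeries a k x := by
  rw [(hasDerivAt_hcbSeries ha k hx).deriv, hcbSeries, hcbSeries, ← tsum_mul_left,
    ← tsum_mul_left, ← (summable_hcbCoeff_mul ha (k + 1) hx).tsum_sub
      ((summable_hcbCoeff_mul ha k hx).mul_left a)]
  refine tsum_congr fun n => ?_
  rcases n with _ | n
  · simp; ring
  · rw [Nat.add_sub_cancel]; ring

lemma one_sub_mul_hcbSeries_one {a : ℝ} (ha : 0 < a) {x : ℝ} (hx : |x| < 1) :
    (1 - x) * hcbSeries a 1 x = hcbSeries a 0 x / 2 + (a - 1 / 2) * hcbCoeff a 0 := by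
  have h0 := summable_hcbCoeff_mul ha 0 hx
  have h1 := summable_hcbCoeff_mul ha 1 hx
  have e0 : hcbSeries a 0 x = _ := h0.tsum_eq_zero_add
  have e1 : hcbSeries a 1 x = _ := h1.tsum_eq_zero_add
  have key : x * hcbSeries a 1 x =
      ∑' n : ℕ, hcbCoeff a (n + 1) * (((n + 1 : ℕ) : ℝ) + a) ^ 1 * x ^ (n + 1) -
        (∑' n : ℕ, hcbCoeff a (n + 1) * (((n + 1 : ℕ) : ℝ) + a) ^ 0 * x ^ (n + 1)) / 2 := by
    rw [hcbSeries, ← tsum_mul_left, ← tsum_div_const,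
      ← ((summable_nat_add_iff 1).2 h1).tsum_sub (((summable_nat_add_iff 1).2 h0).div_const 2)]
    refine tsum_congr fun n => ?_
    push_cast
    linear_combination (-x ^ (n + 1)) * hcbCoeff_succ ha n
  rw [sub_mul, key, one_mul, e0, e1]
  simp
  ring

/-- Lehmer's formula: iterating `x d/dx` on the differential equation of the series. -/
lemma hcbSeries_eq_lehmer {a : ℝ} (ha : 0 < a) (k : ℕ) {x : ℝ} (hx : x ∈ Set.Ioo (0 : ℝ) 1) :
    (2 * (1 - x)) ^ k * hcbSeries a k x =
      2 * ((a - 1 / 2) * hcbCoeff a 0) * (lehmerPa a k).eval x +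
        hcbSeries a 0 x * (lehmerQ k).eval x := by
  induction k generalizing x with
  | zero => simp [lehmerPa, lehmerQ]
  | succ k ih =>
    have habs : |x| < 1 := by rw [abs_of_pos hx.1]; exact hx.2
    have hd : ∀ j, HasDerivAt (hcbSeries a j) (deriv (hcbSeries a j) x) x := fun j =>
      (hasDerivAt_hcbSeries ha j habs).differentiableAt.hasDerivAt
    have hL := ((((hasDerivAt_id x).const_sub 1).const_mul 2).pow k).mul (hd k)
    have hR := (((lehmerPa a k).hasDerivAt x).const_mul
      (2 * ((a - 1 / 2) * hcbCoeff a 0))).add ((hd 0).mul ((lehmerQ k).hasDerivAt x))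
    have heq := hL.unique (hR.congr_of_eventuallyEq <| by
      filter_upwards [isOpen_Ioo.mem_nhds hx] with y hy using ih hy)
    have hk := mul_deriv_hcbSeries ha k habs
    have h0 := mul_deriv_hcbSeries ha 0 habs
    have hode := one_sub_mul_hcbSeries_one ha habs
    have hpow : (k : ℝ) * (2 * (1 - x)) ^ (k - 1) * (2 * (1 - x)) =
        k * (2 * (1 - x)) ^ k := by
      rcases k with _ | k
      · simp
      · rw [Nat.add_sub_cancel, pow_succ]; ring
    have ihx := ih hx
    simp only [id, Pi.pow_apply] at heq
    rw [zero_add] at h0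
    simp only [lehmerPa, lehmerQ, eval_add, eval_mul, eval_sub, eval_C, eval_X, eval_one,
      eval_ofNat]
    linear_combination 2 * x * (1 - x) * heq + (2 * x * k + 2 * a * (1 - x)) * ihx -
      (2 * (1 - x)) ^ (k + 1) * hk + 2 * x * hcbSeries a k x * hpow +
      2 * (1 - x) * (lehmerQ k).eval x * h0 + 2 * (lehmerQ k).eval x * hode

lemma hcbSeries_zero_quarter {a : ℝ} (ha : 1 / 2 < a) :
    hcbSeries a 0 (1 / 4) = (a - 1 / 2) * hcbCoeff a 0 * (4 : ℝ) ^ a / Real.sqrt 3 *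
      incBeta (1 / 4) (a - 1 / 2) (1 / 2) := by
  have ha0 : 0 < a := by linarith
  have habs : ∀ x ∈ Set.Icc (0 : ℝ) (1 / 4), |x| < 1 := fun x hx => by
    rw [abs_of_nonneg hx.1]; linarith [hx.2]
  set K := (a - 1 / 2) * hcbCoeff a 0
  have hint : IntervalIntegrable
      (fun x : ℝ => x ^ (a - 1 / 2 - 1) * (1 - x) ^ ((1 / 2 : ℝ) - 1)) MeasureTheory.volume
      0 (1 / 4) := by
    refine (intervalIntegral.intervalIntegrable_rpow' (by linarith)).mul_continuousOn ?_
    refine ContinuousOn.rpow_const (by fun_prop) fun x hx => Or.inl ?_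
    rw [Set.uIcc_of_le (by norm_num)] at hx
    linarith [hx.2]
  have hftc := intervalIntegral.integral_eq_sub_of_hasDerivAt_of_le
    (f := fun x => x ^ (a - 1 / 2) * (1 - x) ^ (1 / 2 : ℝ) * hcbSeries a 0 x)
    (f' := fun x => K * (x ^ (a - 1 / 2 - 1) * (1 - x) ^ ((1 / 2 : ℝ) - 1)))
    (a := 0) (b := 1 / 4) (by norm_num) ?_ ?_ (hint.const_mul K)
  · rw [intervalIntegral.integral_const_mul] at hftc
    have h0 : (0 : ℝ) ^ (a - 1 / 2) = 0 := Real.zero_rpow (by linarith)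
    have hq : (1 / 4 : ℝ) ^ (a - 1 / 2) * (1 - 1 / 4) ^ (1 / 2 : ℝ) =
        Real.sqrt 3 / (4 : ℝ) ^ a := by
      rw [Real.sqrt_eq_rpow, show (1 - 1 / 4 : ℝ) = 3 * (1 / 4) by norm_num,
        Real.mul_rpow (by norm_num) (by norm_num), mul_left_comm,
        ← Real.rpow_add (by norm_num), sub_add_cancel, one_div 4,
        Real.inv_rpow (by norm_num)]
      rfl
    simp only [hq, h0, zero_mul, sub_zero] at hftc
    rw [incBeta, mul_div_assoc, mul_right_comm, hftc]
    have : (0 : ℝ) < (4 : ℝ) ^ a := by positivity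
    field_simp
  · intro x hx
    have hx1 : x ≤ 1 / 4 := hx.2
    refine ContinuousWithinAt.mul (ContinuousWithinAt.mul ?_ ?_) ?_
    · exact (Real.continuousAt_rpow_const _ _ (Or.inr (by linarith))).continuousWithinAt
    · exact ContinuousWithinAt.rpow_const (by fun_prop) (Or.inr (by norm_num))
    · exact (hasDerivAt_hcbSeries ha0 0 (habs x hx)).continuousAt.continuousWithinAt
  · intro x hx
    have hx0 : 0 < x := hx.1
    have hx1 : 0 < 1 - x := by linarith [hx.2]
    have hxa := habs x ⟨hx.1.le, hx.2.le⟩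
    have hd := (((Real.hasDerivAt_rpow_const (p := a - 1 / 2) (Or.inl hx0.ne')).mul
      (((hasDerivAt_id x).const_sub 1).rpow_const (p := (1 / 2 : ℝ)) (Or.inl hx1.ne'))).mul
      (hasDerivAt_hcbSeries ha0 0 hxa).differentiableAt.hasDerivAt)
    refine hd.congr_deriv ?_
    have h0 := mul_deriv_hcbSeries ha0 0 hxa
    have hode := one_sub_mul_hcbSeries_one ha0 hxa
    have e1 : x ^ (a - 1 / 2) = x ^ (a - 1 / 2 - 1) * x := by
      rw [Real.rpow_sub_one hx0.ne', div_mul_cancel₀ _ hx0.ne']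
    have e2 : (1 - x) ^ (1 / 2 : ℝ) = (1 - x) ^ ((1 / 2 : ℝ) - 1) * (1 - x) := by
      rw [Real.rpow_sub_one hx1.ne', div_mul_cancel₀ _ hx1.ne']
    rw [zero_add] at h0
    simp only [id, Pi.mul_apply]
    rw [e1, e2]
    generalize x ^ (a - 1 / 2 - 1) = u
    generalize (1 - x) ^ ((1 / 2 : ℝ) - 1) = v
    linear_combination u * v * (1 - x) * h0 + u * v * hode

lemma zetaHCB_eq_hcbSeries {a : ℝ} (ha : 0 < a) (k : ℕ) :
    zetaHCB (1 - k) a = hcbSeries a k (1 / 4) := by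
  refine tsum_congr fun n => ?_
  have hy : 0 < (n : ℝ) + a := by positivity
  have := genBinom_central_pos hy
  rw [hcbCoeff, zpow_sub₀ hy.ne', zpow_one, zpow_natCast, one_div_pow]
  field_simp

lemma derivative_mem_liftsRing {R S : Type*} [CommRing R] [CommRing S] {f : R →+* S}
    {p : S[X]} (hp : p ∈ liftsRing f) : derivative p ∈ liftsRing f := by
  obtain ⟨q, rfl⟩ := hp
  exact ⟨derivative q, (derivative_map q f).symm⟩

lemma exists_map_eq_eval_of_mem_liftsRing {R S : Type*} [CommRing R] [CommRing S] {f : R →+* S}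
    {p : S[X]} (hp : p ∈ liftsRing f) (r : R) : ∃ t, f t = p.eval (f r) := by
  obtain ⟨q, rfl⟩ := hp
  exact ⟨q.eval r, by rw [coe_mapRingHom, eval_map, eval₂_at_apply]⟩

lemma C_mem_liftsRing {R S : Type*} [CommRing R] [CommRing S] (f : R →+* S) (r : R) :
    C (f r) ∈ liftsRing f := (lifts_iff_liftsRing f _).1 (C_mem_lifts f r)

lemma X_mem_liftsRing {R S : Type*} [CommRing R] [CommRing S] (f : R →+* S) :
    (X : S[X]) ∈ liftsRing f := (lifts_iff_liftsRing f _).1 (X_mem_lifts f)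

lemma two_mul_X_mul_one_sub_X_mem_liftsRing {R S : Type*} [CommRing R] [CommRing S]
    (f : R →+* S) : (2 * X * (1 - X) : S[X]) ∈ liftsRing f :=
  mul_mem (mul_mem (ofNat_mem _ 2) (X_mem_liftsRing f)) (sub_mem (one_mem _) (X_mem_liftsRing f))

lemma lehmerQ_mem_liftsRing {R : Type*} [CommRing R] (f : R →+* ℝ) (k : ℕ) :
    lehmerQ k ∈ liftsRing f := by
  induction k with
  | zero => exact one_mem _
  | succ k ih =>
    have hC : C (2 * (k : ℝ)) ∈ liftsRing f := by
      simpa only [map_mul, map_natCast, map_ofNat] using C_mem_liftsRing f (2 * (k : R))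
    exact add_mem (mul_mem (add_mem (mul_mem hC (X_mem_liftsRing f)) (one_mem _)) ih)
      (mul_mem (two_mul_X_mul_one_sub_X_mem_liftsRing f) (derivative_mem_liftsRing ih))

lemma lehmerPa_mem_liftsRing {R : Type*} [CommRing R] (f : R →+* ℝ) (r : R) (k : ℕ) :
    lehmerPa (f r) k ∈ liftsRing f := by
  induction k with
  | zero => exact zero_mem _
  | succ k ih =>
    have h2 : C (2 : ℝ) ∈ liftsRing f := by simpa only [map_ofNat] using C_mem_liftsRing f (2 : R)
    have hk : C ((k : ℝ) - f r) ∈ liftsRing f := by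
      simpa using C_mem_liftsRing f ((k : R) - r)
    exact add_mem (add_mem (mul_mem (mul_mem h2 (add_mem (mul_mem hk (X_mem_liftsRing f))
      (C_mem_liftsRing f r))) ih)
      (mul_mem (two_mul_X_mul_one_sub_X_mem_liftsRing f) (derivative_mem_liftsRing ih)))
      (lehmerQ_mem_liftsRing f k)

/-- For every integer `k ≥ 0` and real `a > 1/2`:
`ζ_HCB(1-k,a) = ((2a-1) Γ(a+1)²/(a Γ(2a+1))) (2/3)^k
  ( p_{k-1}(a,1/4) + 4^{a-1} (2/√3) B(1/4; a-1/2, 1/2) q_{k-1}(1/4) )`;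
in particular `ζ_HCB(1-k,a)` lies in
`(Γ(a+1)²/Γ(2a+1)) ( ℚ(a) + (4^a/√3) B(1/4; a-1/2, 1/2) ℚ(a) )`, where elements of `ℚ(a)`
are quotients of rational polynomials evaluated at `a`. -/
theorem zetaHCB_nonpos_values (k : ℕ) (a : ℝ) (ha : 1 / 2 < a) :
    zetaHCB (1 - k) a =
      (2 * a - 1) * Real.Gamma (a + 1) ^ 2 / (a * Real.Gamma (2 * a + 1)) * (2 / 3) ^ k *
        ((lehmerPa a k).eval (1 / 4) +
          (4 : ℝ) ^ (a - 1) * (2 / Real.sqrt 3) * incBeta (1 / 4) (a - 1 / 2) (1 / 2) *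
            (lehmerQ k).eval (1 / 4)) ∧
    ∃ f₁ g₁ f₂ g₂ : Polynomial ℚ,
      Polynomial.aeval a g₁ ≠ 0 ∧ Polynomial.aeval a g₂ ≠ 0 ∧
      zetaHCB (1 - k) a =
        Real.Gamma (a + 1) ^ 2 / Real.Gamma (2 * a + 1) *
          (Polynomial.aeval a f₁ / Polynomial.aeval a g₁ +
            (4 : ℝ) ^ a / Real.sqrt 3 * incBeta (1 / 4) (a - 1 / 2) (1 / 2) *
              (Polynomial.aeval a f₂ / Polynomial.aeval a g₂)) := by
  have ha0 : 0 < a := by linarith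
  have hformula : zetaHCB (1 - k) a =
      (2 * a - 1) * Real.Gamma (a + 1) ^ 2 / (a * Real.Gamma (2 * a + 1)) * (2 / 3) ^ k *
        ((lehmerPa a k).eval (1 / 4) +
          (4 : ℝ) ^ (a - 1) * (2 / Real.sqrt 3) * incBeta (1 / 4) (a - 1 / 2) (1 / 2) *
            (lehmerQ k).eval (1 / 4)) := by
    have hc : hcbCoeff a 0 = Real.Gamma (a + 1) ^ 2 / (a * Real.Gamma (2 * a + 1)) := by
      have h1 := Real.Gamma_pos_of_pos (s := 2 * a + 1) (by linarith)
      have h2 := Real.Gamma_pos_of_pos (s := a + 1) (by linarith)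
      simp only [hcbCoeff, genBinom, Nat.cast_zero, zero_add, pow_zero]
      rw [show 2 * a - a + 1 = a + 1 by ring]
      field_simp
    have h := hcbSeries_eq_lehmer ha0 k (x := 1 / 4) (by norm_num)
    rw [hcbSeries_zero_quarter ha, show (2 * (1 - 1 / 4) : ℝ) = (2 / 3)⁻¹ by norm_num,
      inv_pow, inv_mul_eq_iff_eq_mul₀ (by positivity), hc] at h
    rw [zetaHCB_eq_hcbSeries ha0, h, Real.rpow_sub_one (by norm_num)]
    ring
  refine ⟨hformula, ?_⟩
  let f : ℚ[X] →+* ℝ := (aeval a : ℚ[X] →ₐ[ℚ] ℝ)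
  have hfa : f X = a := aeval_X a
  have hf4 : f (C (1 / 4)) = 1 / 4 := by
    change aeval a (C (1 / 4 : ℚ)) = _
    simp
  obtain ⟨P, hP⟩ := exists_map_eq_eval_of_mem_liftsRing (lehmerPa_mem_liftsRing f X k) (C (1 / 4))
  obtain ⟨Q, hQ⟩ := exists_map_eq_eval_of_mem_liftsRing (lehmerQ_mem_liftsRing f k) (C (1 / 4))
  rw [hfa, hf4] at hP
  rw [hf4] at hQ
  change aeval a P = _ at hP
  change aeval a Q = _ at hQ
  refine ⟨C ((2 / 3) ^ k) * (2 * X - 1) * P, X, C ((2 / 3) ^ k / 2) * (2 * X - 1) * Q, X,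
    by simpa using ha0.ne', by simpa using ha0.ne', ?_⟩
  rw [hformula, Real.rpow_sub_one (by norm_num)]
  simp only [map_mul, map_sub, map_one, map_ofNat, aeval_X, aeval_C, hP, hQ, eq_ratCast]
  push_cast
  field_simp
  ring
end

section
/- For every integer k ≥ 0 and every integer m ≥ 1, there exist rational numbers q₁ and q₂ such that ζ_HCB(1-k, m+1/2) = (q₁ + q₂·√3)·π. -/
open scoped Nat

/-- The binomial coefficient `C(-1/2, n)` is `C(2n, n) / (-4)^n`. -/
lemma ring_choose_neg_half_mul (n : ℕ) :
    Ring.choose (-1 / 2 : ℝ) n * (-4) ^ n = n.centralBinom := by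
  induction n with
  | zero => simp
  | succ n ih =>
    have hc : ((n : ℝ) + 1) * (n + 1).centralBinom = 2 * (2 * n + 1) * n.centralBinom :=
      mod_cast Nat.succ_mul_centralBinom_succ n
    have hr : ((n : ℝ) + 1) * Ring.choose (-1 / 2 : ℝ) (n + 1)
        = Ring.choose (-1 / 2 : ℝ) n * (-1 / 2 - n) := by
      simpa using Ring.choose_smul_choose (-1 / 2 : ℝ) n.le_succ
    have hn : (n : ℝ) + 1 ≠ 0 := by positivity
    apply mul_left_cancel₀ hn
    rw [hc, ← ih, ← mul_assoc, hr]
    ring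

/-- The generating function of the central binomial coefficients at `1/16`. -/
lemma hasSum_centralBinom_div_sixteen_pow :
    HasSum (fun n : ℕ ↦ (n.centralBinom : ℝ) / 16 ^ n) (2 / 3 * √3) := by
  have h := (Real.one_add_rpow_hasFPowerSeriesOnBall_zero (a := -1 / 2)).hasSum
    (y := (-1 / 4 : ℝ)) (by simp [enorm_eq_nnnorm])
  have hval : (1 + (0 + -1 / 4 : ℝ)) ^ (-1 / 2 : ℝ) = 2 / 3 * √3 := by
    rw [show (1 + (0 + -1 / 4 : ℝ)) = 3 / 4 by norm_num,
      show (-1 / 2 : ℝ) = -(1 / 2) by norm_num, Real.rpow_neg (by norm_num),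
      ← Real.sqrt_eq_rpow, Real.sqrt_div (by norm_num), show (4 : ℝ) = 2 ^ 2 by norm_num,
      Real.sqrt_sq (by norm_num)]
    field_simp
    norm_num
  rw [hval] at h
  refine h.congr_fun fun n ↦ ?_
  have h16 : (16 : ℝ) ^ n = (-4) ^ n * (-4) ^ n := by rw [← mul_pow]; norm_num
  have h4 : (-4 : ℝ) ^ n ≠ 0 := by positivity
  rw [← ring_choose_neg_half_mul, h16, show (-1 / 4 : ℝ) = (-4)⁻¹ by norm_num,
    binomialSeries_apply, List.ofFn_const, List.prod_replicate, smul_eq_mul, inv_pow]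
  field_simp

/-- Reciprocals of the generalized central binomial coefficients at half-integers. -/
lemma inv_genBinom_half (N : ℕ) :
    (genBinom (2 * ((N : ℝ) + 1 / 2)) ((N : ℝ) + 1 / 2))⁻¹
      = Real.pi / 2 * ((N : ℝ) + 1 / 2) * (N.centralBinom / 16 ^ N) := by
  have hD : (((2 * N + 1 : ℕ)‼ : ℕ) : ℝ) * 2 ^ N = (2 * N + 1) * N.centralBinom * N ! := by
    have h1 := Nat.factorial_eq_mul_doubleFactorial (2 * N)
    have h2 := Nat.centralBinom_eq_two_mul_choose N
    have h3 := Nat.choose_mul_factorial_mul_factorial (show N ≤ 2 * N by omega)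
    rw [show 2 * N - N = N by omega, ← h2] at h3
    rw [Nat.doubleFactorial_two_mul, Nat.factorial_succ, ← h3] at h1
    have h4 : (2 * N + 1 : ℕ)‼ * 2 ^ N = (2 * N + 1) * N.centralBinom * N ! := by
      apply Nat.eq_of_mul_eq_mul_right N.factorial_pos
      linarith
    exact_mod_cast h4
  have hF : Real.Gamma (2 * ((N : ℝ) + 1 / 2) + 1) = (2 * N + 1 : ℕ)‼ * (2 ^ N * N !) := by
    rw [show 2 * ((N : ℝ) + 1 / 2) + 1 = ((2 * N + 1 : ℕ) : ℝ) + 1 by push_cast; ring,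
      Real.Gamma_nat_eq_factorial, Nat.factorial_eq_mul_doubleFactorial,
      Nat.doubleFactorial_two_mul]
    push_cast
    ring
  have hG := Real.Gamma_nat_add_one_add_half N
  have hpos : (((2 * N + 1 : ℕ)‼ : ℕ) : ℝ) ≠ 0 := by
    exact_mod_cast (Nat.doubleFactorial_pos _).ne'
  have hN : (N ! : ℝ) ≠ 0 := by exact_mod_cast N.factorial_ne_zero
  have hpi : √Real.pi * √Real.pi = Real.pi := Real.mul_self_sqrt Real.pi_pos.le
  rw [genBinom, hF, show 2 * ((N : ℝ) + 1 / 2) - (N + 1 / 2) + 1 = N + 1 + 1 / 2 by ring,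
    show (N : ℝ) + 1 / 2 + 1 = N + 1 + 1 / 2 by ring, hG,
    show (16 : ℝ) ^ N = 2 ^ N * 2 ^ N * (2 ^ N * 2 ^ N) by simp only [← mul_pow]; norm_num]
  generalize (((2 * N + 1 : ℕ)‼ : ℕ) : ℝ) = D at *
  rw [inv_div, div_mul_div_comm, mul_mul_mul_comm, hpi, pow_succ]
  field_simp
  linear_combination hD

lemma summable_pow_mul_centralBinom (j : ℕ) :
    Summable fun n : ℕ ↦ (n : ℝ) ^ j * (n.centralBinom / 16 ^ n) := by
  refine Summable.of_nonneg_of_le (fun n ↦ by positivity) (fun n ↦ ?_)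
    (summable_pow_mul_geometric_of_norm_lt_one (R := ℝ) j (r := 1 / 4) (by norm_num))
  have h : (n.centralBinom : ℝ) ≤ 4 ^ n := mod_cast n.centralBinom_le_four_pow
  gcongr
  rw [div_le_iff₀ (by positivity), ← mul_pow]
  norm_num [h]

/-- The moments of `C(2n, n) / 16^n`. -/
noncomputable def centralBinomMoment (j : ℕ) : ℝ :=
  ∑' n : ℕ, (n : ℝ) ^ j * (n.centralBinom / 16 ^ n)

lemma hasSum_add_pow_mul_centralBinom (c : ℝ) (j : ℕ) :
    HasSum (fun n : ℕ ↦ ((n : ℝ) + c) ^ j * (n.centralBinom / 16 ^ n))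
      (∑ i ∈ Finset.range (j + 1), c ^ (j - i) * j.choose i * centralBinomMoment i) := by
  refine (hasSum_sum fun i _ ↦
    (summable_pow_mul_centralBinom i).hasSum.mul_left (c ^ (j - i) * j.choose i)).congr_fun ?_
  intro n
  rw [add_pow, Finset.sum_mul]
  exact Finset.sum_congr rfl fun i _ ↦ by ring

lemma centralBinomMoment_succ (j : ℕ) :
    centralBinomMoment (j + 1) =
      1 / 6 * (2 * ∑ i ∈ Finset.range (j + 1), ((j + 1).choose i : ℝ) * centralBinomMoment i
        - ∑ i ∈ Finset.range (j + 1), (j.choose i : ℝ) * centralBinomMoment i) := by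
  have h1 := hasSum_add_pow_mul_centralBinom 1 (j + 1)
  have h0 := hasSum_add_pow_mul_centralBinom 1 j
  have hs : HasSum (fun n : ℕ ↦ (n : ℝ) ^ (j + 1) * (n.centralBinom / 16 ^ n))
      (centralBinomMoment (j + 1)) := (summable_pow_mul_centralBinom (j + 1)).hasSum
  rw [← hasSum_nat_add_iff' 1] at hs
  have h := ((h1.mul_left 2).sub h0).mul_left (1 / 8)
  have heq := hs.unique (h.congr_fun fun n ↦ ?_)
  · simp only [one_pow, one_mul, Finset.sum_range_succ _ (j + 1)] at heq
    simp at heq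
    linarith
  · have hc : ((n : ℝ) + 1) * (n + 1).centralBinom = 2 * (2 * n + 1) * n.centralBinom :=
      mod_cast Nat.succ_mul_centralBinom_succ n
    push_cast
    rw [pow_succ, mul_assoc, ← mul_div_assoc, hc]
    ring

lemma exists_rat_centralBinomMoment (j : ℕ) :
    ∃ q : ℚ, centralBinomMoment j = q * √3 := by
  induction j using Nat.strong_induction_on with
  | _ j ih =>
    cases j with
    | zero =>
      refine ⟨2 / 3, ?_⟩
      rw [centralBinomMoment]
      simpa using hasSum_centralBinom_div_sixteen_pow.tsum_eq
    | succ j =>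
      choose! q hq using ih
      refine ⟨1 / 6 * (2 * ∑ i ∈ Finset.range (j + 1), ((j + 1).choose i : ℚ) * q i
        - ∑ i ∈ Finset.range (j + 1), (j.choose i : ℚ) * q i), ?_⟩
      have hsum (f : ℕ → ℕ) : ∑ i ∈ Finset.range (j + 1), (f i : ℝ) * centralBinomMoment i
          = (∑ i ∈ Finset.range (j + 1), (f i : ℝ) * q i) * √3 := by
        rw [Finset.sum_mul]
        exact Finset.sum_congr rfl fun i hi ↦ by rw [hq i (Finset.mem_range.1 hi)]; ring
      rw [centralBinomMoment_succ, hsum, hsum]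
      push_cast
      ring

/-- For every integer `k ≥ 0` and every integer `m ≥ 1`, there exist rationals `q₁, q₂` with
`ζ_HCB(1-k, m+1/2) = (q₁ + q₂ √3) π`. -/
theorem zetaHCB_half_integer (k : ℕ) (m : ℕ) (hm : 1 ≤ m) :
    ∃ q₁ q₂ : ℚ,
      zetaHCB (1 - k) ((m : ℝ) + 1 / 2) = ((q₁ : ℝ) + (q₂ : ℝ) * Real.sqrt 3) * Real.pi := by
  choose q hq using exists_rat_centralBinomMoment
  have h := ((hasSum_nat_add_iff' m).2 (hasSum_add_pow_mul_centralBinom (1 / 2) k)).mul_left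
    (Real.pi / 2)
  refine ⟨-(1 / 2) * ∑ n ∈ Finset.range m, ((n : ℚ) + 1 / 2) ^ k * (n.centralBinom / 16 ^ n),
    1 / 2 * ∑ i ∈ Finset.range (k + 1), (1 / 2) ^ (k - i) * k.choose i * q i, ?_⟩
  refine (tsum_congr fun n ↦ ?_).trans (h.tsum_eq.trans ?_)
  · have hx : (n : ℝ) + (m + 1 / 2) = ((n + m : ℕ) : ℝ) + 1 / 2 := by push_cast; ring
    have hx0 : ((n + m : ℕ) : ℝ) + 1 / 2 ≠ 0 := by positivity
    rw [hx, one_div, mul_inv, inv_genBinom_half, zpow_sub₀ hx0, zpow_one, zpow_natCast, inv_div]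
    generalize ((n + m : ℕ) : ℝ) + 1 / 2 = x at *
    field_simp
  · have hsum : ∑ i ∈ Finset.range (k + 1),
        (1 / 2 : ℝ) ^ (k - i) * k.choose i * centralBinomMoment i
          = (∑ i ∈ Finset.range (k + 1), (1 / 2 : ℝ) ^ (k - i) * k.choose i * q i) * √3 := by
      rw [Finset.sum_mul]
      exact Finset.sum_congr rfl fun i _ ↦ by rw [hq i]; ring
    rw [hsum]
    push_cast
    ring
end
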